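/- arXiv:1806.01961 — 2 statements merged into one kernel-verified Lean document; each statement's English description precedes it below -/
import Mathlib

section
/- Let A and G be abelian groups and let f : A → G be a pointed map of degree 2 (no anti-symmetry assumed). Then for every natural number n and every x ∈ A, 2·f(n·x) = n·(n+1)·f(x) + n·(n−1)·f(−x); equivalently, f(n·x) = (n(n+1)/2)·f(x) + (n(n−1)/2)·f(−x), where n(n+1)/2 and n(n−1)/2 are the (integer) binomial coefficients. -/
/-!
The degree 2 identity at `x`, `y`, `-y` is a parallelogram law with defect,
`f (x + y) + f (x - y) = 2 • f x + f y + f (-y)`. Along the multiples of a fixed `x` it says that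
`n ↦ f (n • x)` has constant second difference `f x + f (-x)`, so this sequence is determined by
its values at `0` and `1`, and the binomial expression has the same second difference and initial
values.
-/

/-- A pointed map of degree 2: a map whose third cross-effect vanishes. The term `- f 0` of the
cross-effect is left out, which forces `f 0 = 0`. The source is written additively but may be
noncommutative; the summands occur in the order of their indices. -/
def IsPointedDegreeTwo {A G : Type*} [Add A] [AddCommGroup G] (f : A → G) : Prop :=
  ∀ x₁ x₂ x₃ : A,
    f (x₁ + x₂ + x₃) - f (x₁ + x₂) - f (x₁ + x₃) - f (x₂ + x₃) + f x₁ + f x₂ + f x₃ = 0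

namespace IsPointedDegreeTwo

variable {A G : Type*} [AddCommGroup G] {f : A → G}

theorem map_zero [AddZeroClass A] (hf : IsPointedDegreeTwo f) : f 0 = 0 := by
  simpa using hf 0 0 0

variable [AddGroup A]

theorem map_add_add_map_sub (hf : IsPointedDegreeTwo f) (x y : A) :
    f (x + y) + f (x - y) = 2 • f x + f y + f (-y) := by
  have h := hf x y (-y)
  rw [add_neg_cancel_right, add_neg_cancel, hf.map_zero, ← sub_eq_add_neg] at h
  rw [eq_comm, ← sub_eq_zero, ← h]
  abel

theorem map_add_two_nsmul (hf : IsPointedDegreeTwo f) (n : ℕ) (x : A) :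
    f ((n + 2) • x) = 2 • f ((n + 1) • x) - f (n • x) + f x + f (-x) := by
  have h := hf.map_add_add_map_sub ((n + 1) • x) x
  rw [← succ_nsmul, succ_nsmul x n, add_sub_cancel_right, ← succ_nsmul] at h
  rw [eq_sub_of_add_eq h]
  abel

theorem map_nsmul (hf : IsPointedDegreeTwo f) (n : ℕ) (x : A) :
    f (n • x) = (n + 1).choose 2 • f x + n.choose 2 • f (-x) := by
  have choose_two_succ (m : ℕ) : (m + 1).choose 2 = m + m.choose 2 := by
    rw [Nat.choose_succ_succ' m 1, Nat.choose_one_right]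
  induction n using Nat.twoStepInduction with
  | zero => simp [hf.map_zero]
  | one => simp
  | more n ih ih_succ =>
    rw [hf.map_add_two_nsmul, ih, ih_succ, choose_two_succ (n + 2), choose_two_succ (n + 1),
      choose_two_succ n]
    module

end IsPointedDegreeTwo

theorem two_mul_choose_two (n : ℕ) : 2 * n.choose 2 = n * (n - 1) := by
  rw [Nat.choose_two_right, Nat.mul_div_cancel' (Nat.even_mul_pred_self n).two_dvd]

theorem pointed_map_degree_two_mumford_general {A G : Type*} [AddGroup A] [AddCommGroup G]
    {f : A → G} (hf : IsPointedDegreeTwo f) (n : ℕ) (x : A) :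
    2 • f (n • x) = (n * (n + 1)) • f x + (n * (n - 1)) • f (-x) ∧
      f (n • x) = (n + 1).choose 2 • f x + n.choose 2 • f (-x) := by
  refine ⟨?_, hf.map_nsmul n x⟩
  calc
    2 • f (n • x) = (2 * (n + 1).choose 2) • f x + (2 * n.choose 2) • f (-x) := by
      rw [hf.map_nsmul, smul_add, smul_smul, smul_smul]
    _ = (n * (n + 1)) • f x + (n * (n - 1)) • f (-x) := by
      rw [two_mul_choose_two, two_mul_choose_two, Nat.add_sub_cancel, Nat.mul_comm (n + 1) n]

/-- If `f : A → G` is a pointed map of degree 2 between abelian groups (no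
anti-symmetry assumed), then for every natural number `n` and every `x`,
`2 • f (n • x) = (n*(n+1)) • f x + (n*(n-1)) • f (-x)`; equivalently,
`f (n • x) = (n+1).choose 2 • f x + n.choose 2 • f (-x)`, where the binomial
coefficients are `n(n+1)/2` and `n(n-1)/2`. -/
theorem pointed_map_degree_two_mumford
    (A G : Type*) [AddCommGroup A] [AddCommGroup G] (f : A → G)
    (hdeg : ∀ x₁ x₂ x₃ : A,
      f (x₁ + x₂ + x₃) - f (x₁ + x₂) - f (x₁ + x₃) - f (x₂ + x₃)
        + f x₁ + f x₂ + f x₃ = 0) :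
    ∀ (n : ℕ) (x : A),
      2 • f (n • x) = (n * (n + 1)) • f x + (n * (n - 1)) • f (-x) ∧
      f (n • x) = (n + 1).choose 2 • f x + n.choose 2 • f (-x) :=
  pointed_map_degree_two_mumford_general hdeg
end

section
/- Let G be a finite group acting transitively on a finite nonempty set T, and let Γ be a group acting on G by group automorphisms and on T by permutations, compatibly with the G-action on T. Then the number of Γ-orbits on T is at most the number of Γ-orbits on G: |T/Γ| ≤ |G/Γ|. -/
/-!
By Burnside's lemma it suffices to show `|T^γ| ≤ |G^γ|` for each `γ`. This is clear when `T^γ` is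
empty. Otherwise fix `t ∈ T^γ` with stabilizer `H` and count the set `A` of those `g` with
`g⁻¹ • t ∈ T^γ`, equivalently `g * (γ • g)⁻¹ ∈ H`. By transitivity `|A| = |H| * |T^γ|`. On the other
hand the nonempty fibres of `g ↦ g * (γ • g)⁻¹` are left cosets of `G^γ`, so `|A| ≤ |G^γ| * |H|`.

Burnside's lemma needs a finite group, so `Γ` is replaced by its image in `Perm T × Perm G`, which
has the same orbits.
-/

open MulAction Function
open MonoidHom (commutatorMap)

section FixedPoints

variable {G : Type*} [Group G]

lemma card_preimage_eq_card_subgroup_mul {X : Type*} (H : Subgroup G) {f : G → X}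
    (hf : ∀ a b, f a = f b ↔ a⁻¹ * b ∈ H) (S : Set X) :
    Nat.card (f ⁻¹' S) = Nat.card H * Nat.card ↥(S ∩ Set.range f) := by
  let F : G ⧸ H → X := Quotient.lift f fun a b hab ↦ (hf a b).2 (QuotientGroup.leftRel_apply.1 hab)
  have F_injective : Injective F := by
    rintro ⟨a⟩ ⟨b⟩ hab
    exact QuotientGroup.eq.2 ((hf a b).1 hab)
  have range_F : Set.range F = Set.range f := Set.range_quot_lift _
  calc Nat.card (f ⁻¹' S) = Nat.card (QuotientGroup.mk (s := H) ⁻¹' (F ⁻¹' S)) := rfl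
    _ = Nat.card H * Nat.card (F ⁻¹' S) := QuotientGroup.card_preimage_mk H _
    _ = Nat.card H * Nat.card ↥(S ∩ Set.range f) := by
      rw [← Set.preimage_inter_range, range_F,
        Nat.card_preimage_of_injective F_injective (range_F ▸ Set.inter_subset_right)]

lemma commutatorMap_eq_iff (φ : G →* G) (a b : G) :
    commutatorMap φ a = commutatorMap φ b ↔ a⁻¹ * b ∈ φ.eqLocus (.id G) := by
  change a / φ a = b / φ b ↔ φ (a⁻¹ * b) = a⁻¹ * b
  rw [map_mul, map_inv, div_eq_mul_inv, div_eq_mul_inv, eq_mul_inv_iff_mul_eq, mul_assoc,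
    eq_inv_mul_iff_mul_eq]

lemma card_commutatorMap_preimage_le (φ : G →* G) (S : Set G) [Finite S] :
    Nat.card (commutatorMap φ ⁻¹' S) ≤ Nat.card (φ.eqLocus (.id G)) * Nat.card S := by
  rw [card_preimage_eq_card_subgroup_mul _ (commutatorMap_eq_iff φ)]
  exact Nat.mul_le_mul_left _ (Nat.card_mono S.toFinite Set.inter_subset_left)

variable {T : Type*} [MulAction G T]

lemma card_smul_preimage [IsPretransitive G T] (t : T) (S : Set T) :
    Nat.card ((fun g : G ↦ g • t) ⁻¹' S) = Nat.card (stabilizer G t) * Nat.card S := by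
  have fibre (a b : G) : a • t = b • t ↔ a⁻¹ * b ∈ stabilizer G t := by
    rw [mem_stabilizer_iff, mul_smul, inv_smul_eq_iff, eq_comm]
  rw [card_preimage_eq_card_subgroup_mul _ fibre, (surjective_smul G t).range_eq, Set.inter_univ]

lemma commutatorMap_mem_stabilizer_iff {φ : G →* G} (f : T →ₑ[φ] T) {t : T}
    (ht : IsFixedPt f t) (g : G) :
    commutatorMap φ g ∈ stabilizer G t ↔ IsFixedPt f (g⁻¹ • t) := by
  rw [IsFixedPt, map_smulₛₗ, ht.eq, map_inv, mem_stabilizer_iff, MonoidHom.commutatorMap_apply,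
    div_eq_mul_inv, mul_smul, eq_inv_smul_iff]

theorem card_fixedPoints_le_card_eqLocus_id [Finite G] [IsPretransitive G T] {φ : G →* G}
    (f : T →ₑ[φ] T) : Nat.card (fixedPoints f) ≤ Nat.card (φ.eqLocus (.id G)) := by
  obtain hempty | ⟨t, ht⟩ := (fixedPoints f).eq_empty_or_nonempty
  · simp [hempty]
  have preimage_eq_inv : commutatorMap φ ⁻¹' stabilizer G t =
      ((fun g : G ↦ g • t) ⁻¹' fixedPoints f)⁻¹ :=
    Set.ext (commutatorMap_mem_stabilizer_iff f ht)
  refine Nat.le_of_mul_le_mul_left ?_ (Nat.card_pos (α := stabilizer G t))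
  calc Nat.card (stabilizer G t) * Nat.card (fixedPoints f)
      = Nat.card (commutatorMap φ ⁻¹' stabilizer G t) := by
        rw [preimage_eq_inv, Set.natCard_inv, card_smul_preimage]
    _ ≤ Nat.card (φ.eqLocus (.id G)) * Nat.card (stabilizer G t) :=
        card_commutatorMap_preimage_le φ (stabilizer G t)
    _ = Nat.card (stabilizer G t) * Nat.card (φ.eqLocus (.id G)) := mul_comm _ _

end FixedPoints

section Burnside

variable {Γ : Type*} [Group Γ] {X Y : Type*} [MulAction Γ X] [MulAction Γ Y]

lemma orbitRel_eq_of_surjective {P : Type*} [Group P] [MulAction P X] {π : Γ → P}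
    (hπ : Surjective π) (smul_eq : ∀ γ (x : X), π γ • x = γ • x) :
    orbitRel Γ X = orbitRel P X := by
  ext x y
  simp only [orbitRel_apply, mem_orbit_iff, hπ.exists, smul_eq]

variable [Finite X] [Finite Y]

lemma sum_natCard_fixedBy [Fintype Γ] :
    ∑ γ : Γ, Nat.card (fixedBy X γ) = Nat.card (orbitRel.Quotient Γ X) * Nat.card Γ := by
  classical
  have := Fintype.ofFinite X
  simpa only [Nat.card_eq_fintype_card] using
    sum_card_fixedBy_eq_card_orbits_mul_card_group Γ X

lemma card_orbits_le_of_card_fixedBy_le_of_finite [Finite Γ]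
    (h : ∀ γ : Γ, Nat.card (fixedBy X γ) ≤ Nat.card (fixedBy Y γ)) :
    Nat.card (orbitRel.Quotient Γ X) ≤ Nat.card (orbitRel.Quotient Γ Y) := by
  have := Fintype.ofFinite Γ
  refine Nat.le_of_mul_le_mul_right ?_ (Nat.card_pos (α := Γ))
  rw [← sum_natCard_fixedBy, ← sum_natCard_fixedBy]
  exact Finset.sum_le_sum fun γ _ ↦ h γ

theorem card_orbits_le_of_card_fixedBy_le
    (h : ∀ γ : Γ, Nat.card (fixedBy X γ) ≤ Nat.card (fixedBy Y γ)) :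
    Nat.card (orbitRel.Quotient Γ X) ≤ Nat.card (orbitRel.Quotient Γ Y) := by
  let Φ : Γ →* Equiv.Perm X × Equiv.Perm Y := (toPermHom Γ X).prod (toPermHom Γ Y)
  let _ : MulAction Φ.range X := .compHom X ((MonoidHom.fst _ _).comp Φ.range.subtype)
  let _ : MulAction Φ.range Y := .compHom Y ((MonoidHom.snd _ _).comp Φ.range.subtype)
  have orbitRel_X : orbitRel Γ X = orbitRel Φ.range X :=
    orbitRel_eq_of_surjective Φ.rangeRestrict_surjective fun _ _ ↦ rfl
  have orbitRel_Y : orbitRel Γ Y = orbitRel Φ.range Y :=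
    orbitRel_eq_of_surjective Φ.rangeRestrict_surjective fun _ _ ↦ rfl
  rw [orbitRel.Quotient, orbitRel.Quotient, orbitRel_X, orbitRel_Y]
  exact card_orbits_le_of_card_fixedBy_le_of_finite (Φ.rangeRestrict_surjective.forall.2 h)

end Burnside

/-- Let `G` be a finite group acting transitively on a finite nonempty set `T`,
and `Γ` a group acting on `G` by group automorphisms and on `T` by
permutations, compatibly with the `G`-action on `T`.  Then the number of
`Γ`-orbits on `T` is at most the number of `Γ`-orbits on `G`. -/
theorem orbit_count_transitive_le
    (G T Γ : Type*) [Group G] [Finite G] [Finite T] [Nonempty T]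
    [MulAction G T]
    (htrans : ∀ t t' : T, ∃ g : G, g • t = t')
    [Group Γ] [MulDistribMulAction Γ G] [MulAction Γ T]
    (hcompat : ∀ (γ : Γ) (g : G) (t : T), γ • (g • t) = (γ • g) • (γ • t)) :
    Nat.card (MulAction.orbitRel.Quotient Γ T)
      ≤ Nat.card (MulAction.orbitRel.Quotient Γ G) := by
  have : IsPretransitive G T := ⟨htrans⟩
  refine card_orbits_le_of_card_fixedBy_le fun γ ↦ ?_
  let f : T →ₑ[MulDistribMulAction.toMonoidHom G γ] T := ⟨(γ • ·), hcompat γ⟩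
  exact card_fixedPoints_le_card_eqLocus_id f
end
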